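/- Let p be an odd prime and t ≥ 2357 an integer with 0 < p − t < (5/(2√6) − 1)·√t, and let d be an integer with t ≤ d ≤ p. Let R be a (p+1)-regular finite simple graph with an even number of vertices and λ(R) ≤ 2√p. Then R contains p − d pairwise edge-disjoint perfect matchings, and the graph H obtained from R by deleting the edges of these p − d perfect matchings is (d+1)-regular and satisfies λ(H) ≤ (5/√6)·√d and girth(H) ≥ girth(R). -/

import Mathlib

open Classical

set_option linter.unusedSectionVars false

noncomputable section

namespace Formal

variable {V : Type*} [Fintype V] [DecidableEq V]

/-- The real adjacency matrix of a finite simple graph. -/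
def adjMat (G : SimpleGraph V) : Matrix V V ℝ :=
  letI := Classical.decRel G.Adj
  SimpleGraph.adjMatrix ℝ G

lemma adjMat_isHermitian (G : SimpleGraph V) : (adjMat G).IsHermitian := by
  letI := Classical.decRel G.Adj
  unfold adjMat
  rw [Matrix.IsHermitian, Matrix.conjTranspose_eq_transpose_of_trivial]
  exact SimpleGraph.isSymm_adjMatrix G

/-- `G` is `k`-regular: every vertex has exactly `k` neighbours. -/
def IsRegular (G : SimpleGraph V) (k : ℕ) : Prop :=
  ∀ v : V, (G.neighborSet v).ncard = k

/-- The eigenvalues (with multiplicity) of the adjacency matrix, indexed by vertices. -/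
def eigs (G : SimpleGraph V) : V → ℝ :=
  (adjMat_isHermitian G).eigenvalues

/-- The absolute values of the adjacency eigenvalues, sorted in increasing order. -/
def sortedAbsEigs (G : SimpleGraph V) : List ℝ :=
  (Finset.univ.val.map fun i => |eigs G i|).sort (· ≤ ·)

/-- `λ(G)`: the second largest absolute value of an eigenvalue (with multiplicity). -/
def secondLargestAbsEig (G : SimpleGraph V) : ℝ :=
  (sortedAbsEigs G).getD (Fintype.card V - 2) 0

/-- `λ₃(G)`: the third largest absolute value of an eigenvalue (with multiplicity). -/
def thirdLargestAbsEig (G : SimpleGraph V) : ℝ :=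
  (sortedAbsEigs G).getD (Fintype.card V - 3) 0

/-- `μ` has a `(k, ε)`-localized (ℓ²-normalized) eigenvector for `A(G)`. -/
def HasLocalizedEigenvector (G : SimpleGraph V) (μ : ℝ) (k : ℕ) (ε : ℝ) : Prop :=
  ∃ v : V → ℝ, (adjMat G).mulVec v = μ • v ∧ (∑ x, (v x) ^ 2) = 1 ∧
    ∃ S : Finset V, S.card = k ∧ ε ≤ ∑ x ∈ S, (v x) ^ 2

/-- There are `r` distinct eigenvalues of `A(G)`, each with a `(k, ε)`-localized
eigenvector for some `k ≤ bound`. -/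
def LocalizedSpectrum (G : SimpleGraph V) (r : ℕ) (ε bound : ℝ) : Prop :=
  ∃ Λ : Finset ℝ, Λ.card = r ∧
    ∀ μ ∈ Λ, ∃ k : ℕ, (k : ℝ) ≤ bound ∧ HasLocalizedEigenvector G μ k ε

/-- `girth(G) ≥ x` for a real number `x` (`girth = ⊤` counts as `≥ x`). -/
def girthGe {W : Type*} (G : SimpleGraph W) (x : ℝ) : Prop :=
  ∀ g : ℕ, G.girth = g → x ≤ g

/-- `girth(G) > x` for a real number `x` (`girth = ⊤` counts as `> x`). -/
def girthGt {W : Type*} (G : SimpleGraph W) (x : ℝ) : Prop :=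
  ∀ g : ℕ, G.girth = g → x < g

/-- The `j`-th prime, so `nthPrime 1 = 2`, `nthPrime 2 = 3`, ..., `nthPrime 10 = 29`. -/
def nthPrime (j : ℕ) : ℕ :=
  Nat.nth Nat.Prime (j - 1)

open Matrix

/-- The second largest value of a finite family is at most `c` exactly when at most one member of
the family exceeds `c`. -/
lemma sort_getD_card_sub_two_le_iff (f : V → ℝ) (hV : 2 ≤ Fintype.card V) (c : ℝ) :
    ((Finset.univ.val.map f).sort (· ≤ ·)).getD (Fintype.card V - 2) 0 ≤ c ↔
      (Finset.univ.filter fun i => c < f i).card ≤ 1 := by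
  set L := (Finset.univ.val.map f).sort (· ≤ ·) with hL
  have hlen : L.length = Fintype.card V := by simp [hL]
  have hsorted : L.Pairwise (· ≤ ·) := Multiset.pairwise_sort _ _
  have hcount : (Finset.univ.filter fun i => c < f i).card = L.countP (c < ·) := by
    have h : Multiset.countP (c < ·) (L : Multiset ℝ) = L.countP (c < ·) := by simp
    rw [← h, hL, Multiset.sort_eq, Multiset.countP_map]
    rfl
  have hmono : ∀ i j (hi : i < L.length) (hj : j < L.length), i ≤ j → L[i] ≤ L[j] := by
    intro i j hi hj hij
    rcases hij.eq_or_lt with rfl | hlt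
    · exact le_rfl
    · exact List.pairwise_iff_getElem.mp hsorted i j hi hj hlt
  have hlt : Fintype.card V - 2 < L.length := by omega
  rw [hcount, List.getD_eq_getElem _ _ hlt]
  constructor
  · intro h
    rw [← List.take_append_drop (Fintype.card V - 1) L, List.countP_append]
    have h1 : (L.take (Fintype.card V - 1)).countP (c < ·) = 0 := by
      rw [List.countP_eq_zero]
      intro a ha
      obtain ⟨i, hi, rfl⟩ := List.mem_iff_getElem.mp ha
      simp only [List.length_take] at hi
      simp only [List.getElem_take, decide_eq_true_eq, not_lt]
      exact (hmono _ _ _ hlt (by omega)).trans h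
    have h2 := List.countP_le_length (p := (c < ·)) (l := L.drop (Fintype.card V - 1))
    rw [List.length_drop] at h2
    omega
  · intro h
    by_contra! hc
    rw [← List.take_append_drop (Fintype.card V - 2) L, List.countP_append] at h
    have h1 : (L.drop (Fintype.card V - 2)).countP (c < ·) =
        (L.drop (Fintype.card V - 2)).length := by
      rw [List.countP_eq_length]
      intro a ha
      obtain ⟨i, hi, rfl⟩ := List.mem_iff_getElem.mp ha
      simp only [List.length_drop] at hi
      simp only [List.getElem_drop, decide_eq_true_eq]
      exact hc.trans_le (hmono _ _ hlt (by omega) (by omega))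
    rw [List.length_drop] at h1
    omega

lemma adjMat_apply (G : SimpleGraph V) (v w : V) :
    adjMat G v w = if G.Adj v w then 1 else 0 := by
  simp only [adjMat, SimpleGraph.adjMatrix_apply]

lemma adjMat_comm (G : SimpleGraph V) (v w : V) : adjMat G v w = adjMat G w v := by
  simp only [adjMat_apply, G.adj_comm]

lemma adjMat_nonneg (G : SimpleGraph V) (v w : V) : 0 ≤ adjMat G v w := by
  rw [adjMat_apply]; split_ifs <;> norm_num

lemma adjMat_le_one (G : SimpleGraph V) (v w : V) : adjMat G v w ≤ 1 := by
  rw [adjMat_apply]; split_ifs <;> norm_num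

lemma sum_adjMat_eq_ncard (G : SimpleGraph V) (v : V) :
    ∑ w, adjMat G v w = (G.neighborSet v).ncard := by
  simp only [adjMat_apply, Finset.sum_boole]
  rw [Set.ncard_eq_toFinset_card']
  congr 2
  ext w
  simp

lemma IsRegular.sum_adjMat {G : SimpleGraph V} {k : ℕ} (h : IsRegular G k) (v : V) :
    ∑ w, adjMat G v w = k := by
  rw [sum_adjMat_eq_ncard, h v]

/-- The adjacency operator has norm at most `μ` on the vectors orthogonal to the constants. -/
def SpectralBound (G : SimpleGraph V) (μ : ℝ) : Prop :=
  ∀ x : V → ℝ, ∑ v, x v = 0 →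
    ‖WithLp.toLp 2 (adjMat G *ᵥ x)‖ ≤ μ * ‖WithLp.toLp 2 x‖

lemma inner_eigenvectorBasis_mulVec (G : SimpleGraph V) (x : V → ℝ) (i : V) :
    inner ℝ ((adjMat_isHermitian G).eigenvectorBasis i) (WithLp.toLp 2 (adjMat G *ᵥ x)) =
      eigs G i * inner ℝ ((adjMat_isHermitian G).eigenvectorBasis i) (WithLp.toLp 2 x) := by
  have hT : (adjMat G)ᵀ = adjMat G := by
    ext v w; exact adjMat_comm G w v
  simp only [EuclideanSpace.inner_eq_star_dotProduct, star_trivial]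
  rw [dotProduct_comm, dotProduct_mulVec, ← mulVec_transpose, hT,
    Matrix.IsHermitian.mulVec_eigenvectorBasis, smul_dotProduct, dotProduct_comm]
  rfl

lemma norm_mulVec_sq (G : SimpleGraph V) (x : V → ℝ) :
    ‖WithLp.toLp 2 (adjMat G *ᵥ x)‖ ^ 2 = ∑ i, (eigs G i) ^ 2 *
      (inner ℝ ((adjMat_isHermitian G).eigenvectorBasis i) (WithLp.toLp 2 x)) ^ 2 := by
  rw [← (adjMat_isHermitian G).eigenvectorBasis.sum_sq_inner_right]
  simp only [inner_eigenvectorBasis_mulVec, mul_pow]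

lemma IsRegular.spectralBound {G : SimpleGraph V} {k : ℕ} {μ : ℝ} (h : IsRegular G k)
    (hμ : secondLargestAbsEig G ≤ μ) (hμ0 : 0 ≤ μ) (hμk : μ < k) (hV : 2 ≤ Fintype.card V) :
    SpectralBound G μ := by
  intro x hx
  set b := (adjMat_isHermitian G).eigenvectorBasis
  have hcard := (sort_getD_card_sub_two_le_iff (fun i => |eigs G i|) hV μ).mp hμ
  set e : EuclideanSpace ℝ V := WithLp.toLp 2 (fun _ : V => (1 : ℝ)) with he
  have hAe : adjMat G *ᵥ (fun _ : V => (1 : ℝ)) = (k : ℝ) • fun _ : V => (1 : ℝ) := by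
    ext v
    simp [mulVec, dotProduct, h.sum_adjMat v]
  have hcoef : ∀ i, |eigs G i| ≤ μ → inner ℝ (b i) e = 0 := by
    intro i hi
    have h1 := inner_eigenvectorBasis_mulVec G (fun _ : V => (1 : ℝ)) i
    rw [hAe, WithLp.toLp_smul, inner_smul_right] at h1
    have h2 : ((k : ℝ) - eigs G i) * inner ℝ (b i) e = 0 := by
      rw [sub_mul, sub_eq_zero]; exact h1
    rcases mul_eq_zero.mp h2 with h3 | h3
    · have := le_abs_self (eigs G i)
      linarith
    · exact h3
  have hxe : inner ℝ e (WithLp.toLp 2 x) = 0 := by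
    simp [he, EuclideanSpace.inner_eq_star_dotProduct, dotProduct, hx]
  have hene : e ≠ 0 := by
    intro h0
    have : Nonempty V := Fintype.card_pos_iff.mp (by omega)
    have := congrArg (fun y : EuclideanSpace ℝ V => y (Classical.arbitrary V)) h0
    simp [he] at this
  have horth : ∀ i, μ < |eigs G i| → inner ℝ (b i) (WithLp.toLp 2 x) = 0 := by
    intro i hi
    have hother : ∀ j, j ≠ i → inner ℝ (b j) e = 0 := by
      intro j hj
      apply hcoef
      by_contra! hc
      exact hj (Finset.card_le_one.mp hcard j (by simpa using hc) i (by simpa using hi))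
    have hsum := b.sum_inner_mul_inner e (WithLp.toLp 2 x)
    rw [hxe, Finset.sum_eq_single i (fun j _ hj => by rw [real_inner_comm, hother j hj, zero_mul])
      (by simp)] at hsum
    rcases mul_eq_zero.mp hsum with h0 | h0
    · exfalso
      apply hene
      have := b.sum_sq_inner_right e
      rw [Finset.sum_eq_zero] at this
      · simpa using this.symm
      · intro j _
        by_cases hj : j = i
        · rw [hj, real_inner_comm, h0]; norm_num
        · rw [hother j hj]; norm_num
    · exact h0
  refine le_of_sq_le_sq ?_ (by positivity)
  rw [norm_mulVec_sq, mul_pow, ← b.sum_sq_inner_right, Finset.mul_sum]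
  refine Finset.sum_le_sum fun i _ => ?_
  by_cases hi : |eigs G i| ≤ μ
  · refine mul_le_mul_of_nonneg_right ?_ (sq_nonneg _)
    exact sq_le_sq' (by linarith [neg_abs_le (eigs G i)]) (le_of_abs_le hi)
  · rw [horth i (not_le.mp hi)]
    simp

lemma SpectralBound.secondLargestAbsEig_le {G : SimpleGraph V} {μ : ℝ} (h : SpectralBound G μ)
    (hμ0 : 0 ≤ μ) (hV : 2 ≤ Fintype.card V) : secondLargestAbsEig G ≤ μ := by
  refine (sort_getD_card_sub_two_le_iff (fun i => |eigs G i|) hV μ).mpr ?_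
  by_contra! hcard
  obtain ⟨i, hi, j, hj, hij⟩ := Finset.one_lt_card.mp hcard
  simp only [Finset.mem_filter, Finset.mem_univ, true_and] at hi hj
  set b := (adjMat_isHermitian G).eigenvectorBasis
  obtain ⟨α, β, hαβ, hsum⟩ : ∃ α β : ℝ, (α ≠ 0 ∨ β ≠ 0) ∧
      α * ∑ v, b i v + β * ∑ v, b j v = 0 := by
    by_cases h0 : ∑ v, b i v = 0
    · exact ⟨1, 0, by simp, by simp [h0]⟩
    · exact ⟨-∑ v, b j v, ∑ v, b i v, Or.inr h0, by ring⟩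
  set y : EuclideanSpace ℝ V := α • b i + β • b j with hy
  have hy0 : ∑ v, y.ofLp v = 0 := by
    simp only [hy, PiLp.add_apply, PiLp.smul_apply, smul_eq_mul, Finset.sum_add_distrib,
      ← Finset.mul_sum]
    exact hsum
  have hin : ∀ l, inner ℝ (b l) y =
      α * (if l = i then 1 else 0) + β * (if l = j then 1 else 0) := by
    intro l
    rw [hy, inner_add_right, inner_smul_right, inner_smul_right,
      orthonormal_iff_ite.mp b.orthonormal, orthonormal_iff_ite.mp b.orthonormal]
  have hle := h y.ofLp hy0
  have hsq := pow_le_pow_left₀ (norm_nonneg _) hle 2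
  rw [norm_mulVec_sq, mul_pow, ← b.sum_sq_inner_right, Finset.mul_sum, ← sub_nonneg,
    ← Finset.sum_sub_distrib] at hsq
  simp only [WithLp.toLp_ofLp] at hsq
  have hsq' : 0 ≤ ∑ l, (μ ^ 2 - eigs G l ^ 2) * (inner ℝ (b l) y) ^ 2 := by
    refine hsq.trans_eq (Finset.sum_congr rfl fun l _ => by ring)
  rw [← Finset.sum_subset (Finset.subset_univ {i, j})] at hsq'
  · rw [Finset.sum_pair hij, hin, hin] at hsq'
    simp only [hij, hij.symm, if_true, if_false, mul_one, mul_zero, add_zero, zero_add] at hsq'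
    have key : ∀ z : ℝ, μ < |z| → μ ^ 2 < z ^ 2 := fun z hz => by
      rw [← sq_abs z]; exact pow_lt_pow_left₀ hz hμ0 (by norm_num)
    have hi' := key _ hi
    have hj' := key _ hj
    rcases hαβ with h0 | h0
    · nlinarith [mul_pos (sub_pos.mpr hi') (by positivity : 0 < α ^ 2),
        mul_nonneg (sub_pos.mpr hj').le (sq_nonneg β)]
    · nlinarith [mul_pos (sub_pos.mpr hj') (by positivity : 0 < β ^ 2),
        mul_nonneg (sub_pos.mpr hi').le (sq_nonneg α)]
  · intro l _ hl
    simp only [Finset.mem_insert, Finset.mem_singleton, not_or] at hl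
    rw [hin]
    simp [hl.1, hl.2]

/-- The number of edges between `S` and its complement. -/
def cut (G : SimpleGraph V) (S : Finset V) : ℝ :=
  ∑ v ∈ S, ∑ w ∈ Sᶜ, adjMat G v w

lemma cut_compl (G : SimpleGraph V) (S : Finset V) : cut G Sᶜ = cut G S := by
  unfold cut
  rw [compl_compl]
  refine Finset.sum_comm.trans ?_
  exact Finset.sum_congr rfl fun v _ => Finset.sum_congr rfl fun w _ => adjMat_comm G w v

lemma IsRegular.cut_add_sum {G : SimpleGraph V} {k : ℕ} (h : IsRegular G k) (S : Finset V) :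
    cut G S + ∑ v ∈ S, ∑ w ∈ S, adjMat G v w = k * S.card := by
  unfold cut
  rw [← Finset.sum_add_distrib]
  simp only [Finset.sum_compl_add_sum, h.sum_adjMat, Finset.sum_const, nsmul_eq_mul, mul_comm]

lemma SpectralBound.mul_le_cut {G : SimpleGraph V} {k : ℕ} {μ : ℝ} (h : IsRegular G k)
    (hμ : SpectralBound G μ) (S : Finset V) :
    (k - μ) * (S.card * (Fintype.card V - S.card)) ≤ Fintype.card V * cut G S := by
  rcases Nat.eq_zero_or_pos (Fintype.card V) with hn | hn
  · have hS : S.card = 0 := by have := S.card_le_univ; omega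
    simp [hn, hS]
  set n : ℝ := (Fintype.card V : ℝ) with hn'
  set c : ℝ := (S.card : ℝ) with hc
  have hnpos : 0 < n := Nat.cast_pos.mpr hn
  set x : V → ℝ := fun v => n * (if v ∈ S then 1 else 0) - c with hx
  have hx0 : ∑ v, x v = 0 := by
    simp only [hx, Finset.sum_sub_distrib, ← Finset.mul_sum, Finset.sum_const, Finset.card_univ,
      nsmul_eq_mul, ← hn']
    simp [← hc]
  have hxx : ∑ v, x v * x v = n * (c * (n - c)) := by
    have : ∀ v, x v * x v = (n ^ 2 - 2 * n * c) * (if v ∈ S then 1 else 0) + c ^ 2 := by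
      intro v
      simp only [hx]
      split_ifs <;> ring
    simp only [this, Finset.sum_add_distrib, ← Finset.mul_sum, Finset.sum_const,
      Finset.card_univ, nsmul_eq_mul, ← hn']
    simp [← hc]
    ring
  have hAx : ∀ v, (adjMat G *ᵥ x) v = n * ∑ w ∈ S, adjMat G v w - c * k := by
    intro v
    simp only [mulVec, dotProduct, hx, mul_sub, Finset.sum_sub_distrib]
    rw [← Finset.sum_mul, h.sum_adjMat, mul_comm (k : ℝ), Finset.mul_sum]
    congr 1
    simp [mul_comm]
  have hcol : ∑ v, ∑ w ∈ S, adjMat G v w = k * c := by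
    refine Finset.sum_comm.trans ?_
    have hw : ∀ w, ∑ v, adjMat G v w = k := fun w => by
      rw [← h.sum_adjMat w]
      exact Finset.sum_congr rfl fun v _ => adjMat_comm G v w
    simp only [hw, Finset.sum_const, nsmul_eq_mul, ← hc, mul_comm]
  have hquad : ∑ v, x v * (adjMat G *ᵥ x) v =
      n ^ 2 * (∑ v ∈ S, ∑ w ∈ S, adjMat G v w) - n * k * c ^ 2 := by
    have h1 : ∀ v, x v * (adjMat G *ᵥ x) v =
        n ^ 2 * (if v ∈ S then ∑ w ∈ S, adjMat G v w else 0) - c * x v * k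
          - c * n * ∑ w ∈ S, adjMat G v w := by
      intro v
      rw [hAx]
      simp only [hx]
      split_ifs <;> ring
    simp only [h1, Finset.sum_sub_distrib, ← Finset.mul_sum, ← Finset.sum_mul, hx0, hcol]
    simp
    ring
  have hCS := real_inner_le_norm (WithLp.toLp 2 (adjMat G *ᵥ x)) (WithLp.toLp 2 x)
  have hxn : ‖WithLp.toLp 2 x‖ ^ 2 = n * (c * (n - c)) := by
    rw [← hxx, EuclideanSpace.real_norm_sq_eq]
    simp only [sq]
  have hle := mul_le_mul_of_nonneg_right (hμ x hx0) (norm_nonneg (WithLp.toLp 2 x))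
  have hin : inner ℝ (WithLp.toLp 2 (adjMat G *ᵥ x)) (WithLp.toLp 2 x) =
      ∑ v, x v * (adjMat G *ᵥ x) v := by
    simp [EuclideanSpace.inner_eq_star_dotProduct, dotProduct]
  rw [hin, hquad] at hCS
  have htotal := h.cut_add_sum S
  rw [← hc] at htotal
  have hE : ∑ v ∈ S, ∑ w ∈ S, adjMat G v w = k * c - cut G S := by linarith
  rw [hE] at hCS
  rw [mul_assoc, ← sq, hxn] at hle
  have hfin : n * ((k - μ) * (c * (n - c))) ≤ n * (n * cut G S) := by linarith
  exact le_of_mul_le_mul_left hfin hnpos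

lemma SpectralBound.le_cut_of_two_mul_card_le {G : SimpleGraph V} {k : ℕ} {μ : ℝ}
    (h : IsRegular G k) (hμ : SpectralBound G μ) (hk : μ + 2 ≤ k) {S : Finset V}
    (hS : S.Nonempty) (hS2 : 2 * S.card ≤ Fintype.card V) : (k : ℝ) ≤ cut G S := by
  have hc : (1 : ℝ) ≤ S.card := by exact_mod_cast hS.card_pos
  rcases le_or_gt S.card k with hle | hlt
  · have hle' : (S.card : ℝ) ≤ k := by exact_mod_cast hle
    have hin : ∀ v ∈ S, ∑ w ∈ S, adjMat G v w ≤ S.card - 1 := by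
      intro v hv
      rw [← Finset.sum_erase_add S _ hv]
      have h0 : adjMat G v v = 0 := by simp [adjMat_apply]
      have h1 : ∑ w ∈ S.erase v, adjMat G v w ≤ ∑ w ∈ S.erase v, 1 :=
        Finset.sum_le_sum fun w _ => adjMat_le_one G v w
      rw [Finset.sum_const, Finset.card_erase_of_mem hv, nsmul_eq_mul, mul_one,
        Nat.cast_sub hS.card_pos, Nat.cast_one] at h1
      linarith
    have hsum := Finset.sum_le_sum hin
    rw [Finset.sum_const, nsmul_eq_mul] at hsum
    have htotal := h.cut_add_sum S
    nlinarith
  · have hlt' : (k : ℝ) < S.card := by exact_mod_cast hlt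
    have hS2' : 2 * (S.card : ℝ) ≤ Fintype.card V := by exact_mod_cast hS2
    have hmix := hμ.mul_le_cut h S
    have hn : (0 : ℝ) < Fintype.card V := by linarith
    have h1 : (Fintype.card V : ℝ) * S.card ≤
        (k - μ) * (S.card * (Fintype.card V - S.card)) := by
      have h2 : (0 : ℝ) ≤ S.card * (Fintype.card V - S.card) :=
        mul_nonneg (by linarith) (by linarith)
      nlinarith
    have h3 := le_of_mul_le_mul_left (h1.trans hmix) hn
    linarith

/-- A regular graph with a spectral gap has edge connectivity equal to its degree. -/
lemma SpectralBound.le_cut {G : SimpleGraph V} {k : ℕ} {μ : ℝ}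
    (h : IsRegular G k) (hμ : SpectralBound G μ) (hk : μ + 2 ≤ k) {S : Finset V}
    (hS : S.Nonempty) (hS' : S ≠ Finset.univ) : (k : ℝ) ≤ cut G S := by
  have hcard := S.card_add_card_compl
  rcases le_or_gt (2 * S.card) (Fintype.card V) with hle | hlt
  · exact hμ.le_cut_of_two_mul_card_le h hk hS hle
  · rw [← cut_compl]
    refine hμ.le_cut_of_two_mul_card_le h hk ?_ (by omega)
    rwa [Finset.nonempty_iff_ne_empty, Ne, Finset.compl_eq_empty_iff]

/-- A regular graph of even order with a spectral gap has a perfect matching. -/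
lemma SpectralBound.exists_isPerfectMatching {G : SimpleGraph V} {k : ℕ} {μ : ℝ}
    (h : IsRegular G k) (hμ : SpectralBound G μ) (hμ0 : 0 ≤ μ) (hk : μ + 2 ≤ k)
    (heven : Even (Fintype.card V)) : ∃ M : G.Subgraph, M.IsPerfectMatching := by
  rw [SimpleGraph.tutte]
  intro U hU
  refine not_le.mpr hU ?_
  set D := ((⊤ : G.Subgraph).deleteVerts U) with hD
  set O : Finset D.coe.ConnectedComponent := D.coe.oddComponents.toFinset with hO
  let T : D.coe.ConnectedComponent → Finset V := fun C => (Subtype.val '' C.supp).toFinset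
  have hmemT : ∀ C v, v ∈ T C ↔ ∃ hv : v ∈ D.verts, D.coe.connectedComponentMk ⟨v, hv⟩ = C := by
    intro C v
    simp [T]
  have hverts : ∀ v, v ∈ D.verts ↔ v ∉ U := by simp [hD]
  have hcut : ∀ C ∈ O, (k : ℝ) ≤ ∑ w ∈ U.toFinset, ∑ v ∈ T C, adjMat G w v := by
    intro C hC
    have hodd : Odd (T C).card := by
      rw [hO, Set.mem_toFinset] at hC
      have hC' : Odd C.supp.ncard := hC
      rwa [← Set.ncard_image_of_injective _ Subtype.val_injective,
        Set.ncard_eq_toFinset_card'] at hC'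
    have hne : (T C).Nonempty := Finset.card_pos.mp hodd.pos
    have huniv : T C ≠ Finset.univ := by
      intro hT
      rw [hT, Finset.card_univ] at hodd
      exact Nat.not_even_iff_odd.mpr hodd heven
    refine (hμ.le_cut h hk hne huniv).trans ?_
    refine le_of_le_of_eq ?_ Finset.sum_comm
    unfold cut
    refine Finset.sum_le_sum fun v hv => ?_
    rw [← Finset.sum_filter_add_sum_filter_not _ (· ∈ U)]
    have hzero : ∑ w ∈ (T C)ᶜ with w ∉ U, adjMat G v w = 0 := by
      refine Finset.sum_eq_zero fun w hw => ?_
      rw [Finset.mem_filter, Finset.mem_compl] at hw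
      rw [adjMat_apply, if_neg]
      intro hvw
      apply hw.1
      obtain ⟨hvD, hvC⟩ := (hmemT C v).mp hv
      have hwD := (hverts w).mpr hw.2
      refine (hmemT C w).mpr ⟨hwD, ?_⟩
      rw [← hvC, SimpleGraph.ConnectedComponent.eq]
      refine SimpleGraph.Adj.reachable ?_
      have := (hverts v).mp hvD
      simp [hD, hw.2, this, hvw.symm]
    rw [hzero, add_zero]
    simp only [adjMat_comm G v]
    refine Finset.sum_le_sum_of_subset_of_nonneg ?_ fun w _ _ => adjMat_nonneg G w v
    intro w hw
    simpa using (Finset.mem_filter.mp hw).2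
  have hdisj : (O : Set D.coe.ConnectedComponent).PairwiseDisjoint T := by
    intro C _ C' _ hCC'
    refine Finset.disjoint_left.mpr fun v hv hv' => hCC' ?_
    obtain ⟨_, h1⟩ := (hmemT C v).mp hv
    obtain ⟨_, h2⟩ := (hmemT C' v).mp hv'
    exact h1.symm.trans h2
  have hsum := Finset.sum_le_sum hcut
  rw [Finset.sum_const, nsmul_eq_mul, Finset.sum_comm] at hsum
  have hup : ∑ w ∈ U.toFinset, ∑ C ∈ O, ∑ v ∈ T C, adjMat G w v ≤ ∑ w ∈ U.toFinset, (k : ℝ) := by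
    refine Finset.sum_le_sum fun w _ => ?_
    rw [← Finset.sum_biUnion hdisj, ← h.sum_adjMat w]
    exact Finset.sum_le_sum_of_subset_of_nonneg (Finset.subset_univ _)
      fun v _ _ => adjMat_nonneg G w v
  rw [Finset.sum_const, nsmul_eq_mul] at hup
  have hcards : (O.card : ℝ) ≤ U.toFinset.card :=
    le_of_mul_le_mul_right (hsum.trans hup) (by linarith)
  rw [Set.ncard_eq_toFinset_card', Set.ncard_eq_toFinset_card']
  exact_mod_cast hcards

lemma SpectralBound.deleteEdges_matching {G : SimpleGraph V} {μ : ℝ} (hμ : SpectralBound G μ)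
    {M : G.Subgraph} (hM : M.IsPerfectMatching) :
    SpectralBound (G.deleteEdges M.edgeSet) (μ + 1) := by
  rw [SimpleGraph.Subgraph.isPerfectMatching_iff] at hM
  choose σ hσ huniq using hM
  have hinv : Function.Involutive σ := fun v => (huniq (σ v) v (hσ v).symm).symm
  intro x hx
  have hmul : adjMat (G.deleteEdges M.edgeSet) *ᵥ x = adjMat G *ᵥ x - x ∘ σ := by
    ext v
    have h1 : (x ∘ σ) v = ∑ w, (if w = σ v then 1 else 0) * x w := by simp
    rw [Pi.sub_apply, h1]
    simp only [mulVec, dotProduct, ← Finset.sum_sub_distrib, ← sub_mul]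
    refine Finset.sum_congr rfl fun w _ => ?_
    congr 1
    simp only [adjMat_apply, SimpleGraph.deleteEdges_adj, SimpleGraph.Subgraph.mem_edgeSet]
    by_cases hw : w = σ v
    · subst hw
      simp [hσ v, (hσ v).adj_sub]
    · have : ¬ M.Adj v w := fun hvw => hw (huniq v w hvw)
      simp [hw, this]
  have hnorm : ‖WithLp.toLp 2 (x ∘ σ)‖ = ‖WithLp.toLp 2 x‖ := by
    simp only [EuclideanSpace.norm_eq]
    congr 1
    exact (Equiv.sum_comp hinv.toPerm fun v => ‖x v‖ ^ 2)
  rw [hmul, WithLp.toLp_sub]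
  calc _ ≤ ‖WithLp.toLp 2 (adjMat G *ᵥ x)‖ + ‖WithLp.toLp 2 (x ∘ σ)‖ := norm_sub_le _ _
    _ ≤ μ * ‖WithLp.toLp 2 x‖ + ‖WithLp.toLp 2 x‖ := by
      rw [hnorm]; exact add_le_add_left (hμ x hx) _
    _ = _ := by ring

lemma IsRegular.deleteEdges_matching {G : SimpleGraph V} {k : ℕ} (h : IsRegular G (k + 1))
    {M : G.Subgraph} (hM : M.IsPerfectMatching) :
    IsRegular (G.deleteEdges M.edgeSet) k := by
  rw [SimpleGraph.Subgraph.isPerfectMatching_iff] at hM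
  intro v
  obtain ⟨w, hw, huniq⟩ := hM v
  have hset : (G.deleteEdges M.edgeSet).neighborSet v = G.neighborSet v \ {w} := by
    ext u
    simp only [SimpleGraph.mem_neighborSet, SimpleGraph.deleteEdges_adj,
      SimpleGraph.Subgraph.mem_edgeSet, Set.mem_sdiff, Set.mem_singleton_iff, and_congr_right_iff]
    intro _
    exact not_congr ⟨huniq u, fun hu => hu ▸ hw⟩
  have hwG : w ∈ G.neighborSet v := hw.adj_sub
  rw [hset, Set.ncard_sdiff_singleton_of_mem hwG, h v]
  rfl

/-- Perfect matchings can be removed one at a time as long as a spectral gap remains. -/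
lemma exists_disjoint_perfectMatchings {R : SimpleGraph V} {k : ℕ} {μ : ℝ}
    (hμ : SpectralBound R μ) (hμ0 : 0 ≤ μ) (heven : Even (Fintype.card V)) (m : ℕ)
    (h : IsRegular R (k + m)) (hk : μ + m + 1 ≤ k) :
    ∃ Ms : Fin m → R.Subgraph,
      (∀ i, (Ms i).IsPerfectMatching) ∧
      (∀ i j, i ≠ j → Disjoint (Ms i).edgeSet (Ms j).edgeSet) ∧
      IsRegular (R.deleteEdges (⋃ i, (Ms i).edgeSet)) k ∧
      SpectralBound (R.deleteEdges (⋃ i, (Ms i).edgeSet)) (μ + m) := by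
  induction m generalizing k with
  | zero =>
    refine ⟨Fin.elim0, fun i => i.elim0, fun i => i.elim0, ?_, ?_⟩
    · simpa using h
    · simpa using hμ
  | succ m ih =>
    push_cast at hk
    obtain ⟨Ms, hMs, hdisj, hreg, hspec⟩ := ih (k := k + 1)
      (by rwa [add_assoc, add_comm 1]) (by push_cast; linarith)
    set H := R.deleteEdges (⋃ i, (Ms i).edgeSet) with hH
    have hHR : H ≤ R := SimpleGraph.deleteEdges_le _
    obtain ⟨M, hM⟩ := hspec.exists_isPerfectMatching hreg (by positivity)
      (by push_cast; linarith) heven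
    set N : R.Subgraph := R.toSubgraph M.spanningCoe (M.spanningCoe_le.trans hHR) with hN
    have hNedge : N.edgeSet = M.edgeSet := by
      ext e
      induction e with | _ v w => simp [hN]
    have hNM : N.IsPerfectMatching :=
      (SimpleGraph.Subgraph.IsPerfectMatching.toSubgraph_iff _).mpr hM
    have hNdisj : ∀ i, Disjoint (Ms i).edgeSet N.edgeSet := by
      intro i
      rw [hNedge, Set.disjoint_left]
      intro e he he'
      have := M.edgeSet_subset he'
      rw [hH, SimpleGraph.edgeSet_deleteEdges] at this
      exact this.2 (Set.mem_iUnion.mpr ⟨i, he⟩)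
    have hunion : R.deleteEdges (⋃ i, ((Fin.snoc Ms N : Fin (m + 1) → R.Subgraph) i).edgeSet) =
        H.deleteEdges M.edgeSet := by
      refine Eq.trans ?_ (SimpleGraph.deleteEdges_deleteEdges _ _).symm
      congr 1
      ext e
      simp [Fin.exists_fin_succ', hNedge]
    refine ⟨Fin.snoc Ms N, ?_, ?_, ?_, ?_⟩
    · intro i
      refine Fin.lastCases ?_ (fun i => ?_) i
      · simpa using hNM
      · simpa using hMs i
    · intro i j
      refine Fin.lastCases ?_ (fun i => ?_) i <;> refine Fin.lastCases ?_ (fun j => ?_) j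
      · simp
      · intro _
        simpa using (hNdisj j).symm
      · intro _
        simpa using hNdisj i
      · intro hij
        simpa using hdisj i j (fun h => hij (h ▸ rfl))
    · rw [hunion]
      exact hreg.deleteEdges_matching hM
    · rw [hunion]
      push_cast
      rw [← add_assoc]
      exact hspec.deleteEdges_matching hM

lemma IsRegular.not_isAcyclic [Nonempty V] {G : SimpleGraph V} {k : ℕ} (h : IsRegular G k)
    (hk : 2 ≤ k) : ¬ G.IsAcyclic := by
  intro hG
  obtain ⟨T, hGT, -, hT⟩ :=
    SimpleGraph.Connected.exists_isTree_le_of_le_of_isAcyclic SimpleGraph.connected_top le_top hG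
  have hdeg : ∀ v, 2 ≤ T.degree v := by
    intro v
    rw [← SimpleGraph.card_neighborSet_eq_degree, ← Nat.card_eq_fintype_card,
      Nat.card_coe_set_eq]
    exact (hk.trans_eq (h v).symm).trans
      (Set.ncard_le_ncard (fun w hw => hGT hw) (Set.toFinite _))
  have : Nontrivial V := by
    obtain ⟨v⟩ := ‹Nonempty V›
    obtain ⟨w, hw⟩ := (T.degree_pos_iff_exists_adj v).mp (by have := hdeg v; omega)
    exact ⟨v, w, hw.ne⟩
  obtain ⟨v, hv⟩ := hT.exists_vert_degree_one_of_nontrivial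
  have := hdeg v
  omega

lemma two_mul_sqrt_add_le {p t d : ℝ} (ht : 1 ≤ t) (htd : t ≤ d) (hdp : d ≤ p)
    (hgap : p - t < (5 / (2 * Real.sqrt 6) - 1) * Real.sqrt t) :
    2 * Real.sqrt p + (p - d) ≤ 5 / Real.sqrt 6 * Real.sqrt d := by
  have hcoef : 5 / Real.sqrt 6 = 2 * (1 + (5 / (2 * Real.sqrt 6) - 1)) := by
    field_simp
    ring
  have hc0 : 0 ≤ 5 / (2 * Real.sqrt 6) - 1 := by
    have hsqrt : Real.sqrt 6 ≤ 5 / 2 := Real.sqrt_le_iff.mpr ⟨by norm_num, by norm_num⟩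
    rw [sub_nonneg, le_div_iff₀ (by positivity)]
    linarith
  rw [hcoef]
  set c := 5 / (2 * Real.sqrt 6) - 1
  have hq1 : 1 ≤ Real.sqrt d := Real.one_le_sqrt.mpr (ht.trans htd)
  have hqq : Real.sqrt d ^ 2 = d := Real.sq_sqrt (by linarith)
  have hgq : p - d ≤ c * Real.sqrt d := by
    have := mul_le_mul_of_nonneg_left (Real.sqrt_le_sqrt htd) hc0
    linarith
  have hp : Real.sqrt p ≤ Real.sqrt d + (p - d) / 2 := by
    rw [Real.sqrt_le_iff]
    refine ⟨by linarith, ?_⟩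
    nlinarith [mul_nonneg (sub_nonneg.mpr hdp) (sub_nonneg.mpr hq1), sq_nonneg (p - d)]
  linarith

/-- deleting `p - d` edge-disjoint perfect matchings from an LPS-type
`(p+1)`-regular expander yields a `(d+1)`-regular expander. -/
theorem stmt_15 {V : Type*} [Fintype V] [DecidableEq V]
    (p t : ℕ) (hp : Nat.Prime p) (hpodd : Odd p) (ht : 2357 ≤ t) (htp : t < p)
    (hgap : (p : ℝ) - t < (5 / (2 * Real.sqrt 6) - 1) * Real.sqrt t)
    (d : ℕ) (hd₁ : t ≤ d) (hd₂ : d ≤ p)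
    (R : SimpleGraph V) (hreg : IsRegular R (p + 1))
    (heven : Even (Fintype.card V))
    (hlam : secondLargestAbsEig R ≤ 2 * Real.sqrt p) :
    ∃ Ms : Fin (p - d) → R.Subgraph,
      (∀ i, (Ms i).IsPerfectMatching) ∧
      (∀ i j, i ≠ j → Disjoint (Ms i).edgeSet (Ms j).edgeSet) ∧
      IsRegular (R.deleteEdges (⋃ i, (Ms i).edgeSet)) (d + 1) ∧
      secondLargestAbsEig (R.deleteEdges (⋃ i, (Ms i).edgeSet)) ≤
        (5 / Real.sqrt 6) * Real.sqrt d ∧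
      R.girth ≤ (R.deleteEdges (⋃ i, (Ms i).edgeSet)).girth := by
  rcases isEmpty_or_nonempty V with hV | hV
  · have hsub : ∀ G : SimpleGraph V, G = R := fun G => Subsingleton.elim _ _
    refine ⟨fun _ => ⊤, fun i => ?_, fun i j _ => ?_, fun v => hV.elim v, ?_, ?_⟩
    · exact SimpleGraph.Subgraph.isPerfectMatching_iff.mpr fun v => hV.elim v
    · refine Set.disjoint_left.mpr fun e => ?_
      induction e with | _ v w => exact hV.elim v
    · have h0 : secondLargestAbsEig (R.deleteEdges (⋃ _ : Fin (p - d), (⊤ : R.Subgraph).edgeSet)) =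
          0 := by
        simp [secondLargestAbsEig, sortedAbsEigs]
      rw [h0]
      positivity
    · rw [hsub (R.deleteEdges _)]
  have ht' : (2357 : ℝ) ≤ t := by exact_mod_cast ht
  have htd : (t : ℝ) ≤ d := by exact_mod_cast hd₁
  have hdp : (d : ℝ) ≤ p := by exact_mod_cast hd₂
  have hcast : ((p - d : ℕ) : ℝ) = p - d := Nat.cast_sub hd₂
  have hV2 : 2 ≤ Fintype.card V := by
    have := Fintype.card_pos (α := V)
    obtain ⟨m, hm⟩ := heven
    omega
  have hbound := two_mul_sqrt_add_le (by linarith) htd hdp hgap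
  have hsmall : 5 / Real.sqrt 6 * Real.sqrt d ≤ d := by
    have h6 : (2 : ℝ) ≤ Real.sqrt 6 := Real.le_sqrt_of_sq_le (by norm_num)
    have hd3 : (3 : ℝ) ≤ Real.sqrt d := Real.le_sqrt_of_sq_le (by linarith)
    have hdd : Real.sqrt d * Real.sqrt d = d := Real.mul_self_sqrt (by linarith)
    have h5 : 5 / Real.sqrt 6 ≤ 3 := by
      rw [div_le_iff₀ (by positivity)]
      linarith
    nlinarith
  have hspec : SpectralBound R (2 * Real.sqrt p) :=
    hreg.spectralBound hlam (by positivity) (by push_cast; linarith) hV2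
  obtain ⟨Ms, hMs, hdisj, hregH, hspecH⟩ :=
    exists_disjoint_perfectMatchings (k := d + 1) hspec (by positivity) heven (p - d)
      (by rwa [show d + 1 + (p - d) = p + 1 by omega]) (by push_cast [hcast]; linarith)
  refine ⟨Ms, hMs, hdisj, hregH, ?_, ?_⟩
  · rw [hcast] at hspecH
    exact (hspecH.secondLargestAbsEig_le (by linarith [Real.sqrt_nonneg (p : ℝ)]) hV2).trans hbound
  · exact SimpleGraph.girth_anti (SimpleGraph.deleteEdges_le _)
      (hregH.not_isAcyclic (by omega))

end Formal
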